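/- arXiv:2602.05333 — 3 statements merged into one kernel-verified Lean document; each statement's English description precedes it below -/
import Mathlib

section
/- In the finite pool-based AL model with self-referential tilted information j̃, for every w ∈ 𝒲 with P_W(w) > 0, the conditional variance of j̃(w,U,H) given W = w decomposes as Var( j̃(w,U,H) | W=w ) = V_U^ι(w) + V_S^ι(w) + V_A^ι(w) + λ²·( V_U^𝖽(w) + V_S^𝖽(w) + V_A^𝖽(w) ) + 2λ·C(w), where, with all expectations, variances and covariances taken under the conditional law of (U,T,H) given W = w (namely P_{U|W}(u|w)·P_{T|U}(t|u)·P_{H|T}(h|t)): V_U^ι(w) is the variance over U of the conditional expectation E[ι(U;H) | U]; V_S^ι(w) is the expectation over U of the variance over T (given U) of the conditional expectation E[ι(U;H) | U,T]; V_A^ι(w) is the expectation over (U,T) of the variance over H (given T) of ι(U;H); V_U^𝖽(w), V_S^𝖽(w), V_A^𝖽(w) are the analogous three quantities with ι(U;H) replaced by 𝖽(w,H); and C(w) := Cov( ι(U;H), 𝖽(w,H) ). Consequently V_in := Σ_w P_W(w)·Var( j̃(w,U,H) | W=w ) equals the P_W-expectation of the above sum of seven terms. -/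
open scoped BigOperators

/-- Information density `ι(u;h) = log ( P_{UH}(u,h) / (P_U(u)·P_H(h)) )` of the joint law
of `(U,H)` in the finite pool-based AL model with joint law
`P(w,u,t,h) = PW w * PU w u * PT u t * PH t h`. -/
noncomputable def iotaUH {𝒲 𝒰 𝒯 ℋ : Type*} [Fintype 𝒲] [Fintype 𝒰] [Fintype 𝒯] [Fintype ℋ]
    (PW : 𝒲 → ℝ) (PU : 𝒲 → 𝒰 → ℝ) (PT : 𝒰 → 𝒯 → ℝ) (PH : 𝒯 → ℋ → ℝ)
    (u : 𝒰) (h : ℋ) : ℝ :=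
  Real.log ((∑ w, ∑ t, PW w * PU w u * PT u t * PH t h) /
    ((∑ w, ∑ t, ∑ h', PW w * PU w u * PT u t * PH t h') *
      (∑ w, ∑ u', ∑ t, PW w * PU w u' * PT u' t * PH t h)))

/-- Expectation of `f(U,T,H)` under the conditional law of `(U,T,H)` given `W = w`,
namely `PU w u * PT u t * PH t h`. -/
noncomputable def condExpW {𝒲 𝒰 𝒯 ℋ : Type*} [Fintype 𝒰] [Fintype 𝒯] [Fintype ℋ]
    (PU : 𝒲 → 𝒰 → ℝ) (PT : 𝒰 → 𝒯 → ℝ) (PH : 𝒯 → ℋ → ℝ)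
    (f : 𝒰 → 𝒯 → ℋ → ℝ) (w : 𝒲) : ℝ :=
  ∑ u, ∑ t, ∑ h, PU w u * PT u t * PH t h * f u t h

/-- Variance of `f(U,T,H)` under the conditional law of `(U,T,H)` given `W = w`. -/
noncomputable def condVarW {𝒲 𝒰 𝒯 ℋ : Type*} [Fintype 𝒰] [Fintype 𝒯] [Fintype ℋ]
    (PU : 𝒲 → 𝒰 → ℝ) (PT : 𝒰 → 𝒯 → ℝ) (PH : 𝒯 → ℋ → ℝ)
    (f : 𝒰 → 𝒯 → ℋ → ℝ) (w : 𝒲) : ℝ :=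
  condExpW PU PT PH (fun u t h => (f u t h - condExpW PU PT PH f w) ^ 2) w

/-!
Given `W = w`, the triple `(U, T, H)` is a Markov chain, so the law of total variance applies twice:
conditioning on `U` splits off the pool term, and conditioning on `T` inside the law of `(T, H)`
given `U` separates the selection term from the learning term. Bilinearity of the covariance
reduces the variance of `ι + λ (𝖽 - d)` to the variances of `ι` and `𝖽` and their covariance.
-/

section WeightedMoments

variable {R α : Type*} [CommRing R] [Fintype α]

/-- Expectation of `f` under the finite law with weights `p`; here `p` may be any function, not only
a probability vector. -/
def weightedMean (p f : α → R) : R := ∑ a, p a * f a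

/-- Covariance of `f` and `g` under the finite law with weights `p`. -/
def weightedCov (p f g : α → R) : R :=
  weightedMean p fun a => (f a - weightedMean p f) * (g a - weightedMean p g)

/-- Variance of `f` under the finite law with weights `p`. -/
def weightedVar (p f : α → R) : R :=
  weightedMean p fun a => (f a - weightedMean p f) ^ 2

lemma weightedMean_add (p f g : α → R) :
    weightedMean p (fun a => f a + g a) = weightedMean p f + weightedMean p g := by
  simp only [weightedMean, mul_add, Finset.sum_add_distrib]

lemma weightedMean_const_mul (p : α → R) (c : R) (f : α → R) :
    weightedMean p (fun a => c * f a) = c * weightedMean p f := by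
  simp only [weightedMean, mul_left_comm _ c, Finset.mul_sum]

lemma weightedMean_const {p : α → R} (hp : ∑ a, p a = 1) (c : R) :
    weightedMean p (fun _ => c) = c := by
  rw [weightedMean, ← Finset.sum_mul, hp, one_mul]

lemma weightedMean_sub_const {p : α → R} (hp : ∑ a, p a = 1) (f : α → R) (c : R) :
    weightedMean p (fun a => f a - c) = weightedMean p f - c := by
  simp only [sub_eq_add_neg, weightedMean_add, weightedMean_const hp]

lemma weightedMean_sub_const_sq {p : α → R} (hp : ∑ a, p a = 1) (f : α → R) (c : R) :
    weightedMean p (fun a => (f a - c) ^ 2) = weightedVar p f + (weightedMean p f - c) ^ 2 := by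
  set m := weightedMean p f with hm
  calc weightedMean p (fun a => (f a - c) ^ 2)
      = weightedMean p (fun a => (f a - m) ^ 2 + 2 * (m - c) * (f a - m) + (m - c) ^ 2) := by
        congr 1 with a
        ring
    _ = weightedVar p f + 2 * (m - c) * (m - m) + (m - c) ^ 2 := by
        rw [weightedMean_add, weightedMean_add, weightedMean_const_mul, weightedMean_const hp,
          weightedMean_sub_const hp, weightedVar, ← hm]
    _ = weightedVar p f + (m - c) ^ 2 := by ring

lemma weightedVar_add_const_mul_sub {p : α → R} (hp : ∑ a, p a = 1) (f g : α → R) (c d : R) :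
    weightedVar p (fun a => f a + c * (g a - d))
      = weightedVar p f + c ^ 2 * weightedVar p g + 2 * c * weightedCov p f g := by
  have mean_eq : weightedMean p (fun a => f a + c * (g a - d))
      = weightedMean p f + c * (weightedMean p g - d) := by
    rw [weightedMean_add, weightedMean_const_mul, weightedMean_sub_const hp]
  simp only [weightedVar, weightedCov, mean_eq, ← weightedMean_const_mul, ← weightedMean_add]
  congr 1 with a
  ring

end WeightedMoments

section TotalVariance

variable {R α β : Type*} [CommRing R]

/-- Weights of the joint law of a pair whose first component has law `p` and whose second component
has law `κ a` given that the first one is `a`; the finite analogue of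
`MeasureTheory.Measure.compProd`. -/
def weightCompProd (p : α → R) (κ : α → β → R) (x : α × β) : R := p x.1 * κ x.1 x.2

variable [Fintype α] [Fintype β]

lemma weightedMean_weightCompProd (p : α → R) (κ : α → β → R) (f : α × β → R) :
    weightedMean (weightCompProd p κ) f
      = weightedMean p fun a => weightedMean (κ a) fun b => f (a, b) := by
  simp only [weightedMean, weightCompProd, Fintype.sum_prod_type, Finset.mul_sum, mul_assoc]

lemma sum_weightCompProd (p : α → R) {κ : α → β → R} (hκ : ∀ a, ∑ b, κ a b = 1) :
    ∑ x, weightCompProd p κ x = ∑ a, p a := by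
  simp only [weightCompProd, Fintype.sum_prod_type, ← Finset.mul_sum, hκ, mul_one]

lemma weightedVar_weightCompProd (p : α → R) {κ : α → β → R} (hκ : ∀ a, ∑ b, κ a b = 1)
    (f : α × β → R) :
    weightedVar (weightCompProd p κ) f
      = weightedVar p (fun a => weightedMean (κ a) fun b => f (a, b))
        + weightedMean p fun a => weightedVar (κ a) fun b => f (a, b) := by
  rw [weightedVar, weightedMean_weightCompProd, weightedMean_weightCompProd]
  simp only [weightedMean_sub_const_sq (hκ _), weightedMean_add]
  exact add_comm _ _

end TotalVariance

section MarkovChain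

variable {R 𝒰 𝒯 ℋ : Type*} [CommRing R]

/-- Weights of the law of the Markov chain `U → T → H` with initial law `p` and transition
kernels `κ`, `η`. The product associates to the right so that `weightCompProd (κ u) η` is the law
of `(T, H)` given `U = u`. -/
def chainLaw (p : 𝒰 → R) (κ : 𝒰 → 𝒯 → R) (η : 𝒯 → ℋ → R) : 𝒰 × 𝒯 × ℋ → R :=
  weightCompProd p fun u => weightCompProd (κ u) η

variable [Fintype 𝒰] [Fintype 𝒯] [Fintype ℋ]

/-- The pool term `V_U` of `f(U, T, H)`: the variance over `U` of `E[f | U]`. -/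
def poolVar (p : 𝒰 → R) (κ : 𝒰 → 𝒯 → R) (η : 𝒯 → ℋ → R) (f : 𝒰 → 𝒯 → ℋ → R) : R :=
  weightedVar p fun u => ∑ t, ∑ h, κ u t * η t h * f u t h

/-- The selection term `V_S` of `f(U, T, H)`: the mean over `U` of the variance over `T` of
`E[f | U, T]`. -/
def selectionVar (p : 𝒰 → R) (κ : 𝒰 → 𝒯 → R) (η : 𝒯 → ℋ → R) (f : 𝒰 → 𝒯 → ℋ → R) : R :=
  weightedMean p fun u => weightedVar (κ u) fun t => weightedMean (η t) (f u t)

/-- The learning-algorithm term `V_A` of `f(U, T, H)`: the mean over `(U, T)` of the variance of `f`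
over `H`. -/
def learningVar (p : 𝒰 → R) (κ : 𝒰 → 𝒯 → R) (η : 𝒯 → ℋ → R) (f : 𝒰 → 𝒯 → ℋ → R) : R :=
  weightedMean p fun u => weightedMean (κ u) fun t => weightedVar (η t) (f u t)

lemma sum_chainLaw (p : 𝒰 → R) {κ : 𝒰 → 𝒯 → R} {η : 𝒯 → ℋ → R}
    (hκ : ∀ u, ∑ t, κ u t = 1) (hη : ∀ t, ∑ h, η t h = 1) :
    ∑ x, chainLaw p κ η x = ∑ u, p u :=
  sum_weightCompProd p fun u => (sum_weightCompProd (κ u) hη).trans (hκ u)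

lemma weightedVar_chainLaw (p : 𝒰 → R) {κ : 𝒰 → 𝒯 → R} {η : 𝒯 → ℋ → R}
    (hκ : ∀ u, ∑ t, κ u t = 1) (hη : ∀ t, ∑ h, η t h = 1) (f : 𝒰 → 𝒯 → ℋ → R) :
    weightedVar (chainLaw p κ η) (fun x => f x.1 x.2.1 x.2.2)
      = poolVar p κ η f + selectionVar p κ η f + learningVar p κ η f := by
  have sum_κη (u : 𝒰) : ∑ y, weightCompProd (κ u) η y = 1 :=
    (sum_weightCompProd (κ u) hη).trans (hκ u)
  have mean_given_pool (u : 𝒰) :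
      weightedMean (weightCompProd (κ u) η) (fun y => f u y.1 y.2)
        = ∑ t, ∑ h, κ u t * η t h * f u t h := by
    simp only [weightedMean, weightCompProd, Fintype.sum_prod_type]
  rw [chainLaw, weightedVar_weightCompProd p sum_κη]
  simp only [mean_given_pool, weightedVar_weightCompProd _ hη, weightedMean_add]
  exact (add_assoc _ _ _).symm

end MarkovChain

section ConditionalLaw

variable {𝒲 𝒰 𝒯 ℋ : Type*} [Fintype 𝒰] [Fintype 𝒯] [Fintype ℋ]
  (PU : 𝒲 → 𝒰 → ℝ) (PT : 𝒰 → 𝒯 → ℝ) (PH : 𝒯 → ℋ → ℝ)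

lemma condExpW_eq_weightedMean (f : 𝒰 → 𝒯 → ℋ → ℝ) (w : 𝒲) :
    condExpW PU PT PH f w
      = weightedMean (chainLaw (PU w) PT PH) fun x => f x.1 x.2.1 x.2.2 := by
  simp only [condExpW, weightedMean, chainLaw, weightCompProd, Fintype.sum_prod_type, mul_assoc]

lemma condVarW_eq_weightedVar (f : 𝒰 → 𝒯 → ℋ → ℝ) (w : 𝒲) :
    condVarW PU PT PH f w
      = weightedVar (chainLaw (PU w) PT PH) fun x => f x.1 x.2.1 x.2.2 := by
  simp only [condVarW, condExpW_eq_weightedMean, weightedVar]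

lemma condExpW_sub_mul_sub_eq_weightedCov (f g : 𝒰 → 𝒯 → ℋ → ℝ) (w : 𝒲) :
    condExpW PU PT PH (fun u t h =>
        (f u t h - condExpW PU PT PH f w) * (g u t h - condExpW PU PT PH g w)) w
      = weightedCov (chainLaw (PU w) PT PH)
          (fun x => f x.1 x.2.1 x.2.2) (fun x => g x.1 x.2.1 x.2.2) := by
  simp only [condExpW_eq_weightedMean, weightedCov]

variable {PU PT PH}

theorem V_in_decomposition_general {w : 𝒲} (hPU1 : ∑ u, PU w u = 1)
    (hPT1 : ∀ u, ∑ t, PT u t = 1) (hPH1 : ∀ t, ∑ h, PH t h = 1)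
    (f g : 𝒰 → 𝒯 → ℋ → ℝ) (d lam : ℝ) :
    condVarW PU PT PH (fun u t h => f u t h + lam * (g u t h - d)) w
      = poolVar (PU w) PT PH f + selectionVar (PU w) PT PH f + learningVar (PU w) PT PH f
        + lam ^ 2 * (poolVar (PU w) PT PH g + selectionVar (PU w) PT PH g
            + learningVar (PU w) PT PH g)
        + 2 * lam * condExpW PU PT PH (fun u t h =>
            (f u t h - condExpW PU PT PH f w) * (g u t h - condExpW PU PT PH g w)) w := by
  have mass_one : ∑ x, chainLaw (PU w) PT PH x = 1 := (sum_chainLaw (PU w) hPT1 hPH1).trans hPU1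
  rw [condVarW_eq_weightedVar, weightedVar_add_const_mul_sub mass_one,
    weightedVar_chainLaw (PU w) hPT1 hPH1 f, weightedVar_chainLaw (PU w) hPT1 hPH1 g,
    condExpW_sub_mul_sub_eq_weightedCov]

end ConditionalLaw

/-- **Seven-term decomposition of the conditional variance `V_in(w)`**
(the decomposition of `V_in` in Section 4.2 of the paper).

In the finite pool-based AL model with joint law
`P(w,u,t,h) = PW w * PU w u * PT u t * PH t h` and self-referential tilted information
`j̃(w,u,h) = ι(u;h) + lam * (dst w h − d)`, for every `w` with `PW w > 0` the
conditional variance of `j̃(w,U,H)` given `W = w` decomposes as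
`V_U^ι + V_S^ι + V_A^ι + lam²·(V_U^𝖽 + V_S^𝖽 + V_A^𝖽) + 2·lam·C`, and consequently
`V_in = ∑ w, PW w · Var(j̃(w,U,H) | W = w)` equals the `PW`-expectation of this sum. -/
theorem V_in_decomposition
    {𝒲 𝒰 𝒯 ℋ : Type*} [Fintype 𝒲] [Nonempty 𝒲] [Fintype 𝒰] [Nonempty 𝒰]
    [Fintype 𝒯] [Nonempty 𝒯] [Fintype ℋ] [Nonempty ℋ]
    (PW : 𝒲 → ℝ) (hPW0 : ∀ w, 0 ≤ PW w) (hPW1 : ∑ w, PW w = 1)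
    (PU : 𝒲 → 𝒰 → ℝ) (hPU0 : ∀ w u, 0 ≤ PU w u) (hPU1 : ∀ w, ∑ u, PU w u = 1)
    (PT : 𝒰 → 𝒯 → ℝ) (hPT0 : ∀ u t, 0 ≤ PT u t) (hPT1 : ∀ u, ∑ t, PT u t = 1)
    (PH : 𝒯 → ℋ → ℝ) (hPH0 : ∀ t h, 0 ≤ PH t h) (hPH1 : ∀ t, ∑ h, PH t h = 1)
    (dst : 𝒲 → ℋ → ℝ) (hdst : ∀ w h, 0 ≤ dst w h) (d : ℝ) (hd : 0 ≤ d)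
    (lam : ℝ) (hlam : 0 < lam) :
    let ι : 𝒰 → ℋ → ℝ := iotaUH PW PU PT PH
    let jT : 𝒲 → 𝒰 → ℋ → ℝ := fun w u h => ι u h + lam * (dst w h - d)
    -- conditional expectation of ι(U;H) given U = u (under the law of (T,H) given U)
    let EiU : 𝒰 → ℝ := fun u => ∑ t, ∑ h, PT u t * PH t h * ι u h
    -- conditional expectation of ι(U;H) given U = u, T = t
    let EiUT : 𝒰 → 𝒯 → ℝ := fun u t => ∑ h, PH t h * ι u h
    -- variance over U of E[ι(U;H) | U]
    let VUι : 𝒲 → ℝ := fun w =>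
      ∑ u, PU w u * (EiU u - ∑ u', PU w u' * EiU u') ^ 2
    -- E over U of the variance over T of E[ι(U;H) | U, T]
    let VSι : 𝒲 → ℝ := fun w =>
      ∑ u, PU w u * ∑ t, PT u t * (EiUT u t - ∑ t', PT u t' * EiUT u t') ^ 2
    -- E over (U,T) of the variance over H of ι(U;H)
    let VAι : 𝒲 → ℝ := fun w =>
      ∑ u, PU w u * ∑ t, PT u t * ∑ h, PH t h * (ι u h - EiUT u t) ^ 2
    -- analogous quantities with ι(U;H) replaced by 𝖽(w,H)
    let EdU : 𝒲 → 𝒰 → ℝ := fun w u => ∑ t, ∑ h, PT u t * PH t h * dst w h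
    let EdT : 𝒲 → 𝒯 → ℝ := fun w t => ∑ h, PH t h * dst w h
    let VUd : 𝒲 → ℝ := fun w =>
      ∑ u, PU w u * (EdU w u - ∑ u', PU w u' * EdU w u') ^ 2
    let VSd : 𝒲 → ℝ := fun w =>
      ∑ u, PU w u * ∑ t, PT u t * (EdT w t - ∑ t', PT u t' * EdT w t') ^ 2
    let VAd : 𝒲 → ℝ := fun w =>
      ∑ u, PU w u * ∑ t, PT u t * ∑ h, PH t h * (dst w h - EdT w t) ^ 2
    -- conditional covariance of ι(U;H) and 𝖽(w,H) given W = w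
    let C : 𝒲 → ℝ := fun w =>
      condExpW PU PT PH (fun u _ h =>
        (ι u h - condExpW PU PT PH (fun u' _ h' => ι u' h') w) *
        (dst w h - condExpW PU PT PH (fun _ _ h' => dst w h') w)) w
    (∀ w, 0 < PW w →
      condVarW PU PT PH (fun u _ h => jT w u h) w
        = VUι w + VSι w + VAι w + lam ^ 2 * (VUd w + VSd w + VAd w) + 2 * lam * C w)
    ∧ (∑ w, PW w * condVarW PU PT PH (fun u _ h => jT w u h) w)
        = ∑ w, PW w *
            (VUι w + VSι w + VAι w + lam ^ 2 * (VUd w + VSd w + VAd w) + 2 * lam * C w) := by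
  intro ι
  have decomposition (w : 𝒲) := V_in_decomposition_general (hPU1 w) hPT1 hPH1
    (fun u _ h => ι u h) (fun _ _ h => dst w h) d lam
  exact ⟨fun w _ => decomposition w,
    Finset.sum_congr rfl fun w _ => congrArg (PW w * ·) (decomposition w)⟩
end

section
/- Let 𝒵 be a measurable space, μ a probability measure on 𝒵, n a positive integer, and Z = (Z_1,…,Z_n) an i.i.d. sample from μ. Let g : 𝒵ⁿ → ℝ be bounded measurable, and suppose there exist β ≥ 0 and a bounded measurable function g₀ : 𝒵^{n−1} → ℝ such that for every i ∈ {1,…,n} and every z ∈ 𝒵ⁿ, |g(z) − g₀(z^{∖i})| ≤ β, where z^{∖i} denotes z with its i-th coordinate removed (removal form of uniform stability). Then Var( g(Z) ) ≤ 2·n·β². -/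
open MeasureTheory ProbabilityTheory

/-!
By the Efron–Stein inequality, the variance of a function of independent variables is at most the
sum over the coordinates `i` of the mean of its conditional variance in the `i`-th coordinate, the
others being fixed. If deleting the `i`-th coordinate changes `g` by at most `β i`, then, with the
other coordinates fixed, `g` stays in an interval of half-width `β i` around a constant, so by
Popoviciu's inequality this conditional variance is at most `β i ^ 2`. This yields `∑ i, β i ^ 2`,
which is `n β²` for equal `β i`.

Efron–Stein is proved by splitting off one coordinate at a time: the variance on a product is the
mean conditional variance in the second factor plus the variance of the partial mean, and by Jensen
the latter is at most the mean conditional variance in the first factor.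
-/

open scoped ENNReal

section EVariance

variable {Ω Ω' : Type*} [MeasurableSpace Ω] [MeasurableSpace Ω'] {μ : Measure Ω} {X : Ω → ℝ}

lemma enorm_integral_sq_le_lintegral_enorm_sq [IsProbabilityMeasure μ]
    (hX : AEStronglyMeasurable X μ) : ‖∫ ω, X ω ∂μ‖ₑ ^ 2 ≤ ∫⁻ ω, ‖X ω‖ₑ ^ 2 ∂μ := by
  have hL1L2 : ∫⁻ ω, ‖X ω‖ₑ ∂μ ≤ eLpNorm X 2 μ := by
    rw [← eLpNorm_one_eq_lintegral_enorm]
    exact eLpNorm_le_eLpNorm_of_exponent_le one_le_two hX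
  calc ‖∫ ω, X ω ∂μ‖ₑ ^ 2 ≤ eLpNorm X 2 μ ^ 2 := by
        gcongr
        exact (enorm_integral_le_lintegral_enorm X).trans hL1L2
    _ = ∫⁻ ω, ‖X ω‖ₑ ^ 2 ∂μ := by
        simpa using eLpNorm_nnreal_pow_eq_lintegral (f := X) (μ := μ) (two_ne_zero (α := NNReal))

lemma evariance_sub_const [IsProbabilityMeasure μ] (hX : Integrable X μ) (c : ℝ) :
    eVar[fun ω => X ω - c; μ] = eVar[X; μ] := by
  simp [evariance, integral_sub hX (integrable_const c)]

lemma lintegral_enorm_sub_const_sq [IsProbabilityMeasure μ] (hX : Integrable X μ) (c : ℝ) :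
    ∫⁻ ω, ‖X ω - c‖ₑ ^ 2 ∂μ = eVar[X; μ] + ‖∫ ω, X ω ∂μ - c‖ₑ ^ 2 := by
  have hXc : AEStronglyMeasurable (fun ω => X ω - c) μ := hX.1.sub aestronglyMeasurable_const
  have hmean : ∫ ω, (X ω - c) ∂μ = ∫ ω, X ω ∂μ - c := by
    simp [integral_sub hX (integrable_const c)]
  have hJensen := enorm_integral_sq_le_lintegral_enorm_sq hXc
  rw [← evariance_sub_const hX c, evariance_def' hXc, ← hmean,
    ← Real.enorm_of_nonneg (sq_nonneg _), enorm_pow, tsub_add_cancel_of_le hJensen]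

lemma evariance_le_of_forall_abs_sub_le [IsProbabilityMeasure μ] (hX : AEMeasurable X μ)
    {c r : ℝ} (h : ∀ ω, |X ω - c| ≤ r) : eVar[X; μ] ≤ ENNReal.ofReal (r ^ 2) := by
  have hmem : ∀ ω, X ω ∈ Set.Icc (c - r) (c + r) := fun ω =>
    Set.mem_Icc_iff_abs_le.1 (abs_sub_comm c (X ω) ▸ h ω)
  have hX2 : MemLp X 2 μ := memLp_of_bounded (ae_of_all μ hmem) hX.aestronglyMeasurable 2
  rw [← hX2.ofReal_variance_eq]
  gcongr
  exact (variance_le_sq_of_bounded (ae_of_all μ hmem) hX).trans_eq (by ring)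

lemma integrable_of_forall_abs_sub_le [IsFiniteMeasure μ] (hX : AEStronglyMeasurable X μ)
    {r : ℝ} (h : ∀ ω ω', |X ω - X ω'| ≤ r) : Integrable X μ := by
  rcases isEmpty_or_nonempty Ω with hΩ | ⟨⟨ω₀⟩⟩
  · exact .of_isEmpty
  · refine .of_bound hX (|X ω₀| + r) (ae_of_all μ fun ω => ?_)
    calc |X ω| = |X ω₀ + (X ω - X ω₀)| := by rw [add_sub_cancel]
      _ ≤ |X ω₀| + |X ω - X ω₀| := abs_add_le _ _
      _ ≤ |X ω₀| + r := by gcongr; exact h ω ω₀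

lemma evariance_comp_measurePreserving {ν : Measure Ω'} {φ : Ω' → Ω}
    (hφ : MeasurePreserving φ ν μ) (hX : Measurable X) :
    eVar[fun ω => X (φ ω); ν] = eVar[X; μ] := by
  have hmean : ∫ ω, X (φ ω) ∂ν = ∫ ω, X ω ∂μ := by
    rw [← hφ.map_eq, integral_map hφ.aemeasurable hX.aestronglyMeasurable]
  simp only [evariance, hmean]
  exact hφ.lintegral_comp (f := fun ω => ‖X ω - ∫ ω, X ω ∂μ‖ₑ ^ 2) (by fun_prop)

lemma measurable_evariance_prodMk_left {ν : Measure Ω'} [SFinite ν] {F : Ω × Ω' → ℝ}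
    (hF : Measurable F) : Measurable fun x => eVar[fun y => F (x, y); ν] := by
  have hmean : Measurable fun x => ∫ y, F (x, y) ∂ν :=
    hF.stronglyMeasurable.integral_prod_right'.measurable
  have hdev : Measurable fun p : Ω × Ω' => ‖F p - ∫ y, F (p.1, y) ∂ν‖ₑ ^ 2 :=
    ((hF.sub (hmean.comp measurable_fst)).enorm).pow_const 2
  exact hdev.lintegral_prod_right'

lemma evariance_prod_eq [SFinite μ] {ν : Measure Ω'} [IsProbabilityMeasure ν]
    {F : Ω × Ω' → ℝ} (hF : Measurable F) (hFint : Integrable F (μ.prod ν)) :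
    eVar[F; μ.prod ν] =
      ∫⁻ x, eVar[fun y => F (x, y); ν] ∂μ + eVar[fun x => ∫ y, F (x, y) ∂ν; μ] := by
  rw [evariance, evariance, integral_prod F hFint, lintegral_prod _ (by fun_prop),
    ← lintegral_add_left (measurable_evariance_prodMk_left hF)]
  refine lintegral_congr_ae ?_
  filter_upwards [hFint.prod_right_ae] with x hx
  exact lintegral_enorm_sub_const_sq hx _

lemma evariance_integral_le_lintegral_evariance [SFinite μ] {ν : Measure Ω'}
    [IsProbabilityMeasure ν] {F : Ω × Ω' → ℝ} (hF : Measurable F)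
    (hFint : Integrable F (μ.prod ν)) :
    eVar[fun x => ∫ y, F (x, y) ∂ν; μ] ≤ ∫⁻ y, eVar[fun x => F (x, y); μ] ∂ν := by
  have hmean : Measurable fun y => ∫ x, F (x, y) ∂μ :=
    hF.stronglyMeasurable.integral_prod_left'.measurable
  have hcentred : Measurable fun p : Ω × Ω' => F p - ∫ x, F (x, p.2) ∂μ :=
    hF.sub (hmean.comp measurable_snd)
  -- Jensen in `y`, applied after centring each section `F (·, y)`.
  have hpointwise : ∀ᵐ x ∂μ, ‖∫ y, F (x, y) ∂ν - ∫ x, ∫ y, F (x, y) ∂ν ∂μ‖ₑ ^ 2 ≤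
      ∫⁻ y, ‖F (x, y) - ∫ x, F (x, y) ∂μ‖ₑ ^ 2 ∂ν := by
    filter_upwards [hFint.prod_right_ae] with x hx
    rw [integral_integral_swap (f := fun x y => F (x, y)) hFint,
      ← integral_sub hx hFint.integral_prod_right]
    exact enorm_integral_sq_le_lintegral_enorm_sq
      (hcentred.comp measurable_prodMk_left).aestronglyMeasurable
  calc eVar[fun x => ∫ y, F (x, y) ∂ν; μ]
      ≤ ∫⁻ x, ∫⁻ y, ‖F (x, y) - ∫ x, F (x, y) ∂μ‖ₑ ^ 2 ∂ν ∂μ := lintegral_mono_ae hpointwise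
    _ = ∫⁻ y, eVar[fun x => F (x, y); μ] ∂ν :=
        lintegral_lintegral_swap (hcentred.enorm.pow_const 2).aemeasurable

lemma evariance_prod_le [SFinite μ] {ν : Measure Ω'} [IsProbabilityMeasure ν]
    {F : Ω × Ω' → ℝ} (hF : Measurable F) (hFint : Integrable F (μ.prod ν)) :
    eVar[F; μ.prod ν] ≤
      ∫⁻ x, eVar[fun y => F (x, y); ν] ∂μ + ∫⁻ y, eVar[fun x => F (x, y); μ] ∂ν := by
  rw [evariance_prod_eq hF hFint]
  gcongr
  exact evariance_integral_le_lintegral_evariance hF hFint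

end EVariance

section CoordEVariance

/-- The conditional variance of `f` in the `i`-th coordinate given the other coordinates of `z`:
the term of the Efron–Stein inequality. It is `ℝ≥0∞`-valued so that it can be integrated in `z`
without an integrability condition; its value does not depend on `z i`. -/
noncomputable def coordEVariance {ι : Type*} [DecidableEq ι] {𝒵 : ι → Type*}
    [∀ i, MeasurableSpace (𝒵 i)] (μ : ∀ i, Measure (𝒵 i)) (f : (∀ i, 𝒵 i) → ℝ) (i : ι)
    (z : ∀ i, 𝒵 i) : ℝ≥0∞ :=
  eVar[fun x => f (Function.update z i x); μ i]

lemma measurable_coordEVariance {ι : Type*} [DecidableEq ι] {𝒵 : ι → Type*}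
    [∀ i, MeasurableSpace (𝒵 i)] (μ : ∀ i, Measure (𝒵 i)) {f : (∀ i, 𝒵 i) → ℝ}
    (hf : Measurable f) (i : ι) [SFinite (μ i)] : Measurable (coordEVariance μ f i) :=
  measurable_evariance_prodMk_left (hf.comp measurable_update')

variable {n : ℕ} {𝒵 : Fin (n + 1) → Type*} [∀ i, MeasurableSpace (𝒵 i)]
  (μ : ∀ i, Measure (𝒵 i))

lemma measurePreserving_finCons [∀ i, SigmaFinite (μ i)] :
    MeasurePreserving (fun p : 𝒵 0 × (∀ i : Fin n, 𝒵 i.succ) => Fin.cons (α := 𝒵) p.1 p.2)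
      ((μ 0).prod (Measure.pi fun i => μ i.succ)) (Measure.pi μ) := by
  have hequiv : (fun p : 𝒵 0 × (∀ i : Fin n, 𝒵 i.succ) => Fin.cons (α := 𝒵) p.1 p.2) =
      (MeasurableEquiv.piFinSuccAbove 𝒵 0).symm :=
    funext fun p => (Fin.insertNth_zero p.1 p.2).symm
  rw [hequiv]
  exact (measurePreserving_piFinSuccAbove μ 0).symm

lemma lintegral_pi_eq_lintegral_finCons [∀ i, SigmaFinite (μ i)] {h : (∀ i, 𝒵 i) → ℝ≥0∞}
    (hh : Measurable h) :
    ∫⁻ z, h z ∂Measure.pi μ =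
      ∫⁻ x, ∫⁻ z, h (Fin.cons x z) ∂(Measure.pi fun i : Fin n => μ i.succ) ∂μ 0 := by
  have hcons := measurePreserving_finCons μ
  rw [← hcons.lintegral_comp hh]
  exact lintegral_prod _ (hh.comp hcons.measurable).aemeasurable

lemma coordEVariance_cons_zero (f : (∀ i, 𝒵 i) → ℝ) (x : 𝒵 0) (z : ∀ i : Fin n, 𝒵 i.succ) :
    coordEVariance μ f 0 (Fin.cons x z) = eVar[fun y => f (Fin.cons y z); μ 0] := by
  simp only [coordEVariance, Fin.update_cons_zero]

lemma coordEVariance_cons_succ (f : (∀ i, 𝒵 i) → ℝ) (i : Fin n) (x : 𝒵 0)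
    (z : ∀ i : Fin n, 𝒵 i.succ) :
    coordEVariance μ f i.succ (Fin.cons x z) =
      coordEVariance (fun i => μ i.succ) (fun w => f (Fin.cons x w)) i z := by
  simp only [coordEVariance, Fin.cons_update]

lemma lintegral_coordEVariance_zero [IsProbabilityMeasure (μ 0)] [∀ i, SigmaFinite (μ i)]
    {f : (∀ i, 𝒵 i) → ℝ} (hf : Measurable f) :
    ∫⁻ z, coordEVariance μ f 0 z ∂Measure.pi μ =
      ∫⁻ z, eVar[fun x => f (Fin.cons x z); μ 0] ∂Measure.pi fun i : Fin n => μ i.succ := by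
  rw [lintegral_pi_eq_lintegral_finCons μ (measurable_coordEVariance μ hf 0)]
  simp only [coordEVariance_cons_zero, lintegral_const, measure_univ, mul_one]

lemma lintegral_sum_coordEVariance_succ [∀ i, SigmaFinite (μ i)] {f : (∀ i, 𝒵 i) → ℝ}
    (hf : Measurable f) :
    ∫⁻ x, ∑ i, ∫⁻ z, coordEVariance (fun i => μ i.succ) (fun w => f (Fin.cons x w)) i z
        ∂(Measure.pi fun i : Fin n => μ i.succ) ∂μ 0 =
      ∑ i : Fin n, ∫⁻ z, coordEVariance μ f i.succ z ∂Measure.pi μ := by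
  have hcoord : ∀ i : Fin n, Measurable (coordEVariance μ f i.succ) := fun i =>
    measurable_coordEVariance μ hf i.succ
  have hsection : ∀ i : Fin n, Measurable fun p : 𝒵 0 × (∀ i : Fin n, 𝒵 i.succ) =>
      coordEVariance μ f i.succ (Fin.cons p.1 p.2) := fun i =>
    (hcoord i).comp (measurePreserving_finCons μ).measurable
  simp only [← coordEVariance_cons_succ]
  rw [lintegral_finsetSum _ fun i _ => (hsection i).lintegral_prod_right']
  exact Finset.sum_congr rfl fun i _ => (lintegral_pi_eq_lintegral_finCons μ (hcoord i)).symm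

end CoordEVariance

theorem evariance_pi_le_sum_lintegral_coordEVariance {n : ℕ} {𝒵 : Fin n → Type*}
    [∀ i, MeasurableSpace (𝒵 i)] (μ : ∀ i, Measure (𝒵 i)) [∀ i, IsProbabilityMeasure (μ i)]
    {f : (∀ i, 𝒵 i) → ℝ} (hf : Measurable f) (hfint : Integrable f (Measure.pi μ)) :
    eVar[f; Measure.pi μ] ≤ ∑ i, ∫⁻ z, coordEVariance μ f i z ∂Measure.pi μ := by
  induction n with
  | zero =>
    have hconst : f = fun _ => f default := funext fun z => congrArg f (Subsingleton.elim z _)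
    rw [hconst]
    simp [evariance]
  | succ n ih =>
    have hcons := measurePreserving_finCons μ
    set ν := Measure.pi fun i : Fin n => μ i.succ
    set F : 𝒵 0 × (∀ i : Fin n, 𝒵 i.succ) → ℝ := fun p => f (Fin.cons p.1 p.2)
    have hF : Measurable F := hf.comp hcons.measurable
    have hFint : Integrable F ((μ 0).prod ν) := hcons.integrable_comp_of_integrable hfint
    have htail : ∀ᵐ x ∂μ 0, eVar[fun z => F (x, z); ν] ≤
        ∑ i, ∫⁻ z, coordEVariance (fun i => μ i.succ) (fun w => F (x, w)) i z ∂ν := by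
      filter_upwards [hFint.prod_right_ae] with x hx
      exact ih _ (hF.comp measurable_prodMk_left) hx
    calc eVar[f; Measure.pi μ] = eVar[F; (μ 0).prod ν] :=
          (evariance_comp_measurePreserving hcons hf).symm
      _ ≤ ∫⁻ x, eVar[fun z => F (x, z); ν] ∂μ 0 + ∫⁻ z, eVar[fun x => F (x, z); μ 0] ∂ν :=
          evariance_prod_le hF hFint
      _ ≤ ∫⁻ x, ∑ i, ∫⁻ z, coordEVariance (fun i => μ i.succ) (fun w => F (x, w)) i z ∂ν ∂μ 0 +
            ∫⁻ z, eVar[fun x => F (x, z); μ 0] ∂ν := by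
          gcongr ?_ + _
          exact lintegral_mono_ae htail
      _ = ∑ i, ∫⁻ z, coordEVariance μ f i z ∂Measure.pi μ := by
          rw [Fin.sum_univ_succ, lintegral_coordEVariance_zero μ hf,
            lintegral_sum_coordEVariance_succ μ hf, add_comm]

lemma abs_sub_le_sum_of_abs_update_sub_le {ι : Type*} [Fintype ι] [DecidableEq ι]
    {𝒵 : ι → Type*} {f : (∀ i, 𝒵 i) → ℝ} {δ : ι → ℝ}
    (hδ : ∀ i z x, |f (Function.update z i x) - f z| ≤ δ i) (z w : ∀ i, 𝒵 i) :
    |f z - f w| ≤ ∑ i, δ i := by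
  have hpartial : ∀ s : Finset ι, |f (s.piecewise z w) - f w| ≤ ∑ i ∈ s, δ i := by
    intro s
    induction s using Finset.induction_on with
    | empty => simp
    | insert i s hi ih =>
      rw [Finset.piecewise_insert, Finset.sum_insert hi]
      exact (abs_sub_le _ _ _).trans (add_le_add (hδ i _ _) ih)
  simpa using hpartial Finset.univ

section RemovalStability

variable {m : ℕ} {𝒵 : Fin (m + 1) → Type*} {g : (∀ i, 𝒵 i) → ℝ} {β : Fin (m + 1) → ℝ}
  {g₀ : ∀ i : Fin (m + 1), (∀ j, 𝒵 (i.succAbove j)) → ℝ}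

lemma abs_update_sub_le_of_removal_stability
    (hstab : ∀ i z, |g z - g₀ i (i.removeNth z)| ≤ β i) (i : Fin (m + 1)) (z : ∀ i, 𝒵 i)
    (x : 𝒵 i) : |g (Function.update z i x) - g₀ i (i.removeNth z)| ≤ β i := by
  simpa using hstab i (Function.update z i x)

lemma abs_sub_le_of_removal_stability
    (hstab : ∀ i z, |g z - g₀ i (i.removeNth z)| ≤ β i) (z w : ∀ i, 𝒵 i) :
    |g z - g w| ≤ ∑ i, 2 * β i := by
  refine abs_sub_le_sum_of_abs_update_sub_le (fun i z x => ?_) z w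
  calc |g (Function.update z i x) - g z|
      ≤ |g (Function.update z i x) - g₀ i (i.removeNth z)| + |g₀ i (i.removeNth z) - g z| :=
        abs_sub_le _ _ _
    _ ≤ β i + β i := by
        rw [abs_sub_comm (g₀ i _)]
        exact add_le_add (abs_update_sub_le_of_removal_stability hstab i z x) (hstab i z)
    _ = 2 * β i := (two_mul _).symm

theorem variance_le_of_removal_stability_general [∀ i, MeasurableSpace (𝒵 i)]
    (μ : ∀ i, Measure (𝒵 i)) [∀ i, IsProbabilityMeasure (μ i)] (hg : Measurable g)
    (hstab : ∀ i z, |g z - g₀ i (i.removeNth z)| ≤ β i) :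
    Var[g; Measure.pi μ] ≤ ∑ i, β i ^ 2 := by
  have hint : Integrable g (Measure.pi μ) :=
    integrable_of_forall_abs_sub_le hg.aestronglyMeasurable (abs_sub_le_of_removal_stability hstab)
  have hcoord : ∀ i z, coordEVariance μ g i z ≤ ENNReal.ofReal (β i ^ 2) := fun i z =>
    evariance_le_of_forall_abs_sub_le (hg.comp (measurable_update z)).aemeasurable
      (abs_update_sub_le_of_removal_stability hstab i z)
  refine ENNReal.toReal_le_of_le_ofReal (by positivity) ?_
  calc eVar[g; Measure.pi μ] ≤ ∑ i, ∫⁻ z, coordEVariance μ g i z ∂Measure.pi μ :=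
        evariance_pi_le_sum_lintegral_coordEVariance μ hg hint
    _ ≤ ∑ i, ∫⁻ _, ENNReal.ofReal (β i ^ 2) ∂Measure.pi μ := by
        gcongr with i _ z
        exact hcoord i z
    _ = ENNReal.ofReal (∑ i, β i ^ 2) := by
        simp only [lintegral_const, measure_univ, mul_one,
          ENNReal.ofReal_sum_of_nonneg fun i _ => sq_nonneg (β i)]

end RemovalStability

/-- **Variance bound from removal-form uniform stability.**
Let `Z = (Z_1, …, Z_n)` be an i.i.d. sample from a probability measure `μ` on `𝒵`
(sample size `n = m + 1`, a positive integer), and let `g : 𝒵ⁿ → ℝ` be bounded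
measurable.  Suppose there are `β ≥ 0` and a bounded measurable
`g₀ : 𝒵^{n−1} → ℝ` with `|g z − g₀ (z^{∖i})| ≤ β` for every coordinate `i` and
every `z`, where `z^{∖i}` is `z` with its `i`-th coordinate removed.  Then
`Var (g Z) ≤ 2·n·β²`. -/
theorem variance_le_of_removal_stability
    {𝒵 : Type*} [MeasurableSpace 𝒵] (μ : Measure 𝒵) [IsProbabilityMeasure μ]
    (m : ℕ) (g : (Fin (m + 1) → 𝒵) → ℝ) (hg : Measurable g)
    (C : ℝ) (hgb : ∀ z, |g z| ≤ C)
    (β : ℝ) (hβ : 0 ≤ β)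
    (g₀ : (Fin m → 𝒵) → ℝ) (hg₀ : Measurable g₀)
    (C₀ : ℝ) (hg₀b : ∀ z, |g₀ z| ≤ C₀)
    (hstab : ∀ (i : Fin (m + 1)) (z : Fin (m + 1) → 𝒵),
      |g z - g₀ (fun j => z (i.succAbove j))| ≤ β) :
    variance g (Measure.pi fun _ : Fin (m + 1) => μ) ≤ 2 * (m + 1) * β ^ 2 := by
  have hnonneg : 0 ≤ ((m : ℝ) + 1) * β ^ 2 := by positivity
  calc variance g (Measure.pi fun _ : Fin (m + 1) => μ) ≤ ∑ _ : Fin (m + 1), β ^ 2 :=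
        variance_le_of_removal_stability_general (fun _ => μ) hg hstab
    _ = (m + 1) * β ^ 2 := by simp
    _ ≤ 2 * (m + 1) * β ^ 2 := by linarith
end

section
/- In the finite pool-based AL model with P_W, the pool-observation kernel P_{U|W}, and the learning kernel P_{H|T} fixed, define for each real d the constrained information function 𝕉(d) := inf { I(U;H) : S a Markov kernel from 𝒰 to 𝒯 such that E[ 𝖽(W,H) ] ≤ d under the joint law induced by P_W, P_{U|W}, S, P_{H|T} }, with 𝕉(d) := +∞ if no such S exists, where I(U;H) is the mutual information between U and H under this induced joint law. Then 𝕉 is non-increasing in d, and 𝕉 is convex on the set of d for which it is finite: for d₁, d₂ with 𝕉(d₁), 𝕉(d₂) < ∞ and θ ∈ [0,1], 𝕉(θ·d₁ + (1−θ)·d₂) ≤ θ·𝕉(d₁) + (1−θ)·𝕉(d₂). -/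
open scoped BigOperators

/-- A Markov kernel from `α` to a finite type `β`: every row is a probability mass
function. -/
def IsKernel {α β : Type*} [Fintype β] (K : α → β → ℝ) : Prop :=
  ∀ a, (∀ b, 0 ≤ K a b) ∧ ∑ b, K a b = 1

/-- Joint probability mass of `(U,H)` in the finite pool-based AL model with
data-selection kernel `S`. -/
noncomputable def pUH {𝒲 𝒰 𝒯 ℋ : Type*} [Fintype 𝒲] [Fintype 𝒯]
    (PW : 𝒲 → ℝ) (PU : 𝒲 → 𝒰 → ℝ) (S : 𝒰 → 𝒯 → ℝ) (PH : 𝒯 → ℋ → ℝ)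
    (u : 𝒰) (h : ℋ) : ℝ :=
  ∑ w, ∑ t, PW w * PU w u * S u t * PH t h

/-- Mutual information `I(U;H)` (natural logarithm) under the joint law induced by
`PW`, `PU`, `S`, `PH`. -/
noncomputable def miUH {𝒲 𝒰 𝒯 ℋ : Type*} [Fintype 𝒲] [Fintype 𝒰] [Fintype 𝒯] [Fintype ℋ]
    (PW : 𝒲 → ℝ) (PU : 𝒲 → 𝒰 → ℝ) (S : 𝒰 → 𝒯 → ℝ) (PH : 𝒯 → ℋ → ℝ) : ℝ :=
  ∑ u, ∑ h, pUH PW PU S PH u h *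
    Real.log (pUH PW PU S PH u h /
      ((∑ h', pUH PW PU S PH u h') * (∑ u', pUH PW PU S PH u' h)))

/-- Expected distortion `E[𝖽(W,H)]` under the joint law induced by `PW`, `PU`, `S`,
`PH`. -/
noncomputable def expDist {𝒲 𝒰 𝒯 ℋ : Type*} [Fintype 𝒲] [Fintype 𝒰] [Fintype 𝒯] [Fintype ℋ]
    (PW : 𝒲 → ℝ) (PU : 𝒲 → 𝒰 → ℝ) (S : 𝒰 → 𝒯 → ℝ) (PH : 𝒯 → ℋ → ℝ)
    (dst : 𝒲 → ℋ → ℝ) : ℝ :=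
  ∑ w, ∑ u, ∑ t, ∑ h, PW w * PU w u * S u t * PH t h * dst w h

/-- The constrained information (rate-distortion) function of the finite pool-based AL
model: the infimum of `I(U;H)` over data-selection kernels `S` meeting the average
distortion constraint `E[𝖽(W,H)] ≤ d`, with value `+∞` (in `EReal`) if no such kernel
exists. -/
noncomputable def RDfun {𝒲 𝒰 𝒯 ℋ : Type*} [Fintype 𝒲] [Fintype 𝒰] [Fintype 𝒯] [Fintype ℋ]
    (PW : 𝒲 → ℝ) (PU : 𝒲 → 𝒰 → ℝ) (PH : 𝒯 → ℋ → ℝ) (dst : 𝒲 → ℋ → ℝ) (d : ℝ) : EReal :=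
  sInf {x : EReal | ∃ S : 𝒰 → 𝒯 → ℝ, IsKernel S ∧
    expDist PW PU S PH dst ≤ d ∧ x = (miUH PW PU S PH : ℝ)}

/-!
For a fixed learning kernel the `U`-marginal of the joint law of `(U, H)` does not depend on the
data-selection kernel `S`, while the joint law and the expected distortion are linear in `S`. With
the `U`-marginal fixed, mutual information is a sum of terms `a * log (a / c)` in which `a` and `c`
are linear in the joint law, and such terms are jointly convex by the log-sum inequality. Hence
`RDfun` is the optimal value of a convex program as a function of the level of its constraint, and
the mixture of two feasible kernels is feasible at the mixed level.
-/

lemma sum_mul_log_sum_div_sum_le {ι : Type*} (t : Finset ι) {a c : ι → ℝ}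
    (ha : ∀ i ∈ t, 0 ≤ a i) (hc : ∀ i ∈ t, 0 ≤ c i) (hac : ∀ i ∈ t, c i = 0 → a i = 0) :
    (∑ i ∈ t, a i) * Real.log ((∑ i ∈ t, a i) / ∑ i ∈ t, c i) ≤
      ∑ i ∈ t, a i * Real.log (a i / c i) := by
  rcases (Finset.sum_nonneg hc).eq_or_lt with hC | hC
  · have ha0 : ∀ i ∈ t, a i = 0 := fun i hi =>
      hac i hi ((Finset.sum_eq_zero_iff_of_nonneg hc).1 hC.symm i hi)
    rw [Finset.sum_eq_zero ha0, zero_mul, Finset.sum_eq_zero fun i hi => by rw [ha0 i hi, zero_mul]]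
  · have hmul : ∀ i ∈ t, c i * (a i / c i) = a i := fun i hi => mul_div_cancel_of_imp' (hac i hi)
    -- Jensen for `x * log x` at the points `a i / c i` with weights `c i / ∑ c`.
    have hjensen := Real.convexOn_mul_log.map_centerMass_le hc hC
      fun i hi => Set.mem_Ici.2 (div_nonneg (ha i hi) (hc i hi))
    simp only [Finset.centerMass, smul_eq_mul, Function.comp_apply, ← mul_assoc (c _),
      Finset.sum_congr rfl hmul] at hjensen
    rw [mul_assoc, mul_le_mul_iff_right₀ (inv_pos.2 hC), ← div_eq_inv_mul] at hjensen
    exact hjensen.trans_eq (Finset.sum_congr rfl fun i hi => by rw [hmul i hi])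

/-- The pairs `(a, c)` of nonnegative weights in which `c = 0` forces `a = 0`. On this cone
`a * log (a / c)` is the usual divergence term: the junk value of `a / 0` only meets `a = 0`. -/
def dominatedPairs : ConvexCone ℝ (ℝ × ℝ) where
  carrier := {x | 0 ≤ x.1 ∧ 0 ≤ x.2 ∧ (x.2 = 0 → x.1 = 0)}
  smul_mem' := fun s hs x ⟨ha, hc, hac⟩ => ⟨mul_nonneg hs.le ha, mul_nonneg hs.le hc, fun h =>
    mul_eq_zero_of_right s (hac ((mul_eq_zero.1 h).resolve_left hs.ne'))⟩
  add_mem' := by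
    rintro x ⟨ha, hc, hac⟩ y ⟨hb, he, hbe⟩
    refine ⟨add_nonneg ha hb, add_nonneg hc he, fun h => ?_⟩
    obtain ⟨hc0, he0⟩ := (add_eq_zero_iff_of_nonneg hc he).1 h
    rw [Prod.fst_add, hac hc0, hbe he0, add_zero]

lemma convexOn_of_subadditive_of_homogeneous {E : Type*} [AddCommMonoid E] [Module ℝ E]
    {C : ConvexCone ℝ E} {f : E → ℝ} (hadd : ∀ x ∈ C, ∀ y ∈ C, f (x + y) ≤ f x + f y)
    (hsmul : ∀ s : ℝ, 0 < s → ∀ x ∈ C, f (s • x) = s * f x) : ConvexOn ℝ C f := by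
  refine convexOn_iff_forall_pos.2 ⟨C.convex, fun x hx y hy s t hs ht _ => ?_⟩
  calc f (s • x + t • y) ≤ f (s • x) + f (t • y) :=
        hadd _ (C.smul_mem hs hx) _ (C.smul_mem ht hy)
    _ = s • f x + t • f y := by simp only [hsmul s hs x hx, hsmul t ht y hy, smul_eq_mul]

lemma convexOn_mul_log_div :
    ConvexOn ℝ (dominatedPairs : Set (ℝ × ℝ)) fun x => x.1 * Real.log (x.1 / x.2) := by
  refine convexOn_of_subadditive_of_homogeneous ?_ ?_
  · rintro x ⟨ha, hc, hac⟩ y ⟨hb, he, hbe⟩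
    simpa [Fin.sum_univ_two] using
      sum_mul_log_sum_div_sum_le Finset.univ (a := ![x.1, y.1]) (c := ![x.2, y.2])
        (by simp [Fin.forall_fin_two, ha, hb]) (by simp [Fin.forall_fin_two, hc, he])
        (by simpa [Fin.forall_fin_two] using ⟨hac, hbe⟩)
  · intro s hs x _
    simp only [Prod.smul_fst, Prod.smul_snd, smul_eq_mul, mul_div_mul_left _ _ hs.ne', mul_assoc]

lemma convexOn_finset_sum {𝕜 E β ι : Type*} [Semiring 𝕜] [PartialOrder 𝕜] [AddCommMonoid E]
    [SMul 𝕜 E] [AddCommMonoid β] [PartialOrder β] [IsOrderedAddMonoid β] [Module 𝕜 β]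
    {s : Set E} (hs : Convex 𝕜 s) (t : Finset ι) {f : ι → E → β}
    (hf : ∀ i ∈ t, ConvexOn 𝕜 s (f i)) : ConvexOn 𝕜 s fun x => ∑ i ∈ t, f i x := by
  simp_rw [← Finset.sum_apply]
  exact Finset.sum_induction f (ConvexOn 𝕜 s) (fun _ _ => ConvexOn.add)
    ⟨hs, fun _ _ _ _ _ _ _ _ _ => by simp⟩ hf

section MutualInformation

variable {α β : Type*} [Fintype β]

/-- The nonnegative joint weights on `α × β` whose first marginal is `q`: a domain on which
mutual information is convex. -/
def jointWeights (q : α → ℝ) : Set (α → β → ℝ) :=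
  {p | (∀ a b, 0 ≤ p a b) ∧ ∀ a, ∑ b, p a b = q a}

lemma convex_jointWeights (q : α → ℝ) : Convex ℝ (jointWeights q : Set (α → β → ℝ)) := by
  rintro p ⟨hp, hpq⟩ p' ⟨hp', hpq'⟩ s t hs ht hst
  refine ⟨fun a b => add_nonneg (mul_nonneg hs (hp a b)) (mul_nonneg ht (hp' a b)), fun a => ?_⟩
  simp only [Pi.add_apply, Pi.smul_apply, smul_eq_mul, Finset.sum_add_distrib, ← Finset.mul_sum,
    hpq, hpq', ← add_mul, hst, one_mul]

variable [Fintype α]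

/-- The mutual information (natural logarithm) of the two coordinates under the joint mass
function `p`. The formula is used for arbitrary nonnegative weights, not only those of total
mass one. -/
noncomputable def mutualInfo (p : α → β → ℝ) : ℝ :=
  ∑ a, ∑ b, p a b * Real.log (p a b / ((∑ b', p a b') * ∑ a', p a' b))

lemma mk_mul_sum_mem_dominatedPairs {q : α → ℝ} {p : α → β → ℝ} (hp : p ∈ jointWeights q)
    (a : α) (b : β) : (p a b, q a * ∑ a', p a' b) ∈ dominatedPairs := by
  obtain ⟨hp0, hpq⟩ := hp
  have hq : 0 ≤ q a := hpq a ▸ Finset.sum_nonneg fun b' _ => hp0 a b'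
  refine ⟨hp0 a b, mul_nonneg hq (Finset.sum_nonneg fun a' _ => hp0 a' b), fun h => ?_⟩
  rw [← hpq, mul_eq_zero, Finset.sum_eq_zero_iff_of_nonneg fun b' _ => hp0 a b',
    Finset.sum_eq_zero_iff_of_nonneg fun a' _ => hp0 a' b] at h
  exact h.elim (· b (Finset.mem_univ b)) (· a (Finset.mem_univ a))

lemma convexOn_mul_log_div_marginals (q : α → ℝ) (a : α) (b : β) :
    ConvexOn ℝ (jointWeights q) fun p : α → β → ℝ =>
      p a b * Real.log (p a b / (q a * ∑ a', p a' b)) := by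
  have hlin : IsLinearMap ℝ fun p : α → β → ℝ => (p a b, q a * ∑ a', p a' b) :=
    ⟨fun p p' => by simp [Finset.sum_add_distrib, mul_add],
      fun s p => by simp [← Finset.mul_sum, mul_left_comm]⟩
  exact (convexOn_mul_log_div.comp_linearMap hlin.mk').subset
    (fun p hp => mk_mul_sum_mem_dominatedPairs hp a b) (convex_jointWeights q)

lemma convexOn_mutualInfo (q : α → ℝ) :
    ConvexOn ℝ (jointWeights q) (mutualInfo : (α → β → ℝ) → ℝ) := by
  have hsum : ConvexOn ℝ (jointWeights q) fun p : α → β → ℝ =>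
      ∑ a, ∑ b, p a b * Real.log (p a b / (q a * ∑ a', p a' b)) :=
    convexOn_finset_sum (convex_jointWeights q) _ fun a _ =>
      convexOn_finset_sum (convex_jointWeights q) _ fun b _ =>
        convexOn_mul_log_div_marginals q a b
  exact hsum.congr fun p hp => by simp only [mutualInfo, hp.2]

end MutualInformation

section ConstrainedInf

variable {E β : Type*}

/-- The optimal value of minimising `f` over `v ∈ s` subject to `g v ≤ d`, as a
function of the constraint level `d`; it is `⊤` when the program is infeasible. -/
noncomputable def constrainedInf [LE β] (s : Set E) (f : E → ℝ) (g : E → β) (d : β) : EReal :=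
  ⨅ v ∈ {v ∈ s | g v ≤ d}, (f v : EReal)

lemma constrainedInf_lt_iff [LE β] {s : Set E} {f : E → ℝ} {g : E → β} {d : β} {x : EReal} :
    constrainedInf s f g d < x ↔ ∃ v ∈ s, g v ≤ d ∧ (f v : EReal) < x := by
  simp only [constrainedInf, iInf_lt_iff, Set.mem_ofPred_eq, exists_prop, and_assoc]

lemma constrainedInf_lt_top_iff [LE β] {s : Set E} {f : E → ℝ} {g : E → β} {d : β} :
    constrainedInf s f g d < ⊤ ↔ ∃ v ∈ s, g v ≤ d := by
  simp only [constrainedInf_lt_iff, EReal.coe_lt_top, and_true]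

lemma constrainedInf_le [LE β] {s : Set E} {f : E → ℝ} {g : E → β} {d : β} {v : E}
    (hv : v ∈ s) (hd : g v ≤ d) : constrainedInf s f g d ≤ f v :=
  iInf₂_le v ⟨hv, hd⟩

lemma antitone_constrainedInf [Preorder β] (s : Set E) (f : E → ℝ) (g : E → β) :
    Antitone (constrainedInf s f g) := fun _ _ hd =>
  biInf_mono fun _ hv => ⟨hv.1, hv.2.trans hd⟩

lemma coe_mul_constrainedInf [LE β] (s : Set E) (f : E → ℝ) (g : E → β) (d : β) {a : ℝ}
    (ha : 0 < a) : (a : EReal) * constrainedInf s f g d = constrainedInf s (a • f) g d := by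
  have hscale : ∀ x y : EReal, a * x < y ↔ x < y / a := fun x y => by
    rw [EReal.lt_div_iff (EReal.coe_pos.2 ha) (EReal.coe_ne_top a), mul_comm]
  refine eq_of_forall_gt_iff fun x => ?_
  simp only [hscale, constrainedInf_lt_iff, Pi.smul_apply, smul_eq_mul, EReal.coe_mul]

variable [AddCommMonoid E] [Module ℝ E] [AddCommMonoid β] [PartialOrder β] [IsOrderedAddMonoid β]
  [Module ℝ β] [PosSMulMono ℝ β]

lemma constrainedInf_smul_add_smul_le {s : Set E} {f : E → ℝ} {g : E → β} (hf : ConvexOn ℝ s f)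
    (hg : ConvexOn ℝ s g) {d₁ d₂ : β} (hd₁ : constrainedInf s f g d₁ < ⊤)
    (hd₂ : constrainedInf s f g d₂ < ⊤) {a b : ℝ} (ha : 0 ≤ a) (hb : 0 ≤ b) (hab : a + b = 1) :
    constrainedInf s f g (a • d₁ + b • d₂) ≤
      a * constrainedInf s f g d₁ + b * constrainedInf s f g d₂ := by
  rcases ha.eq_or_lt with rfl | ha'
  · obtain rfl : b = 1 := by simpa using hab
    simp
  rcases hb.eq_or_lt with rfl | hb'
  · obtain rfl : a = 1 := by simpa using hab
    simp
  rw [constrainedInf_lt_top_iff] at hd₁ hd₂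
  rw [coe_mul_constrainedInf s f g d₁ ha', coe_mul_constrainedInf s f g d₂ hb']
  refine EReal.le_add_of_forall_gt (.inr (constrainedInf_lt_top_iff.2 hd₂).ne)
    (.inl (constrainedInf_lt_top_iff.2 hd₁).ne) fun x hx y hy => ?_
  obtain ⟨v, hv, hvd, hvx⟩ := constrainedInf_lt_iff.1 hx
  obtain ⟨w, hw, hwd, hwy⟩ := constrainedInf_lt_iff.1 hy
  calc constrainedInf s f g (a • d₁ + b • d₂)
      ≤ (f (a • v + b • w) : EReal) :=
        constrainedInf_le (hf.1 hv hw ha hb hab) <| (hg.2 hv hw ha hb hab).trans <| by gcongr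
    _ ≤ ((a • f v + b • f w : ℝ) : EReal) := EReal.coe_le_coe (hf.2 hv hw ha hb hab)
    _ ≤ x + y := by
        rw [EReal.coe_add]
        exact add_le_add hvx.le hwy.le

end ConstrainedInf

section ActiveLearning

variable {𝒲 𝒰 𝒯 ℋ : Type*} [Fintype 𝒲] [Fintype 𝒯]

lemma convex_setOf_isKernel {α β : Type*} [Fintype β] :
    Convex ℝ {K : α → β → ℝ | IsKernel K} := fun _ hK _ hL _ _ hs ht hst a =>
  convex_stdSimplex ℝ β (hK a) (hL a) hs ht hst

lemma isLinearMap_pUH (PW : 𝒲 → ℝ) (PU : 𝒲 → 𝒰 → ℝ) (PH : 𝒯 → ℋ → ℝ) :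
    IsLinearMap ℝ fun S => pUH PW PU S PH where
  map_add S S' := by
    ext u h
    simp only [pUH, Pi.add_apply, mul_add, add_mul, Finset.sum_add_distrib]
  map_smul c S := by
    ext u h
    simp only [pUH, Pi.smul_apply, smul_eq_mul, Finset.mul_sum, mul_left_comm _ c, mul_assoc]

lemma isLinearMap_expDist [Fintype 𝒰] [Fintype ℋ] (PW : 𝒲 → ℝ) (PU : 𝒲 → 𝒰 → ℝ)
    (PH : 𝒯 → ℋ → ℝ) (dst : 𝒲 → ℋ → ℝ) : IsLinearMap ℝ fun S => expDist PW PU S PH dst where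
  map_add S S' := by
    simp only [expDist, Pi.add_apply, mul_add, add_mul, Finset.sum_add_distrib]
  map_smul c S := by
    simp only [expDist, Pi.smul_apply, smul_eq_mul, Finset.mul_sum, mul_left_comm _ c, mul_assoc]

lemma pUH_nonneg {PW : 𝒲 → ℝ} {PU : 𝒲 → 𝒰 → ℝ} {S : 𝒰 → 𝒯 → ℝ} {PH : 𝒯 → ℋ → ℝ}
    (hPW : ∀ w, 0 ≤ PW w) (hPU : ∀ w u, 0 ≤ PU w u) (hS : ∀ u t, 0 ≤ S u t)
    (hPH : ∀ t h, 0 ≤ PH t h) (u : 𝒰) (h : ℋ) : 0 ≤ pUH PW PU S PH u h :=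
  Finset.sum_nonneg fun w _ => Finset.sum_nonneg fun t _ =>
    mul_nonneg (mul_nonneg (mul_nonneg (hPW w) (hPU w u)) (hS u t)) (hPH t h)

lemma sum_pUH [Fintype ℋ] (PW : 𝒲 → ℝ) (PU : 𝒲 → 𝒰 → ℝ) {S : 𝒰 → 𝒯 → ℝ} {PH : 𝒯 → ℋ → ℝ}
    (hS : ∀ u, ∑ t, S u t = 1) (hPH : ∀ t, ∑ h, PH t h = 1) (u : 𝒰) :
    ∑ h, pUH PW PU S PH u h = ∑ w, PW w * PU w u := by
  simp only [pUH]
  rw [Finset.sum_comm]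
  refine Finset.sum_congr rfl fun w _ => ?_
  rw [Finset.sum_comm]
  simp_rw [← Finset.mul_sum, hPH, mul_one, ← Finset.mul_sum, hS, mul_one]

variable [Fintype 𝒰] [Fintype ℋ]

lemma convexOn_miUH {PW : 𝒲 → ℝ} {PU : 𝒲 → 𝒰 → ℝ} {PH : 𝒯 → ℋ → ℝ} (hPW : ∀ w, 0 ≤ PW w)
    (hPU : ∀ w u, 0 ≤ PU w u) (hPH : IsKernel PH) :
    ConvexOn ℝ {S | IsKernel S} fun S => miUH PW PU S PH :=
  ((convexOn_mutualInfo fun u => ∑ w, PW w * PU w u).comp_linearMap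
    (isLinearMap_pUH PW PU PH).mk').subset
      (fun _ hS => ⟨pUH_nonneg hPW hPU (fun u => (hS u).1) fun t => (hPH t).1,
        sum_pUH PW PU (fun u => (hS u).2) fun t => (hPH t).2⟩)
      convex_setOf_isKernel

lemma RDfun_eq_constrainedInf (PW : 𝒲 → ℝ) (PU : 𝒲 → 𝒰 → ℝ) (PH : 𝒯 → ℋ → ℝ)
    (dst : 𝒲 → ℋ → ℝ) :
    RDfun PW PU PH dst = constrainedInf {S | IsKernel S} (fun S => miUH PW PU S PH)
      fun S => expDist PW PU S PH dst := by
  ext1 d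
  refine eq_of_forall_gt_iff fun x => ?_
  rw [RDfun, sInf_lt_iff, constrainedInf_lt_iff]
  constructor
  · rintro ⟨_, ⟨S, hS, hd, rfl⟩, hx⟩
    exact ⟨S, hS, hd, hx⟩
  · rintro ⟨S, hS, hd, hx⟩
    exact ⟨_, ⟨S, hS, hd, rfl⟩, hx⟩

theorem RDfun_antitone_convex_general (PW : 𝒲 → ℝ) (hPW : ∀ w, 0 ≤ PW w)
    (PU : 𝒲 → 𝒰 → ℝ) (hPU : ∀ w u, 0 ≤ PU w u) (PH : 𝒯 → ℋ → ℝ) (hPH : IsKernel PH)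
    (dst : 𝒲 → ℋ → ℝ) :
    Antitone (RDfun PW PU PH dst) ∧
      ∀ d₁ d₂ θ : ℝ, RDfun PW PU PH dst d₁ < ⊤ → RDfun PW PU PH dst d₂ < ⊤ → 0 ≤ θ → θ ≤ 1 →
        RDfun PW PU PH dst (θ * d₁ + (1 - θ) * d₂) ≤
          (θ : EReal) * RDfun PW PU PH dst d₁ +
            ((1 - θ : ℝ) : EReal) * RDfun PW PU PH dst d₂ := by
  rw [RDfun_eq_constrainedInf]
  have hdist : ConvexOn ℝ {S | IsKernel S} fun S => expDist PW PU S PH dst :=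
    (isLinearMap_expDist PW PU PH dst).mk'.convexOn convex_setOf_isKernel
  refine ⟨antitone_constrainedInf _ _ _, fun d₁ d₂ θ hd₁ hd₂ hθ0 hθ1 => ?_⟩
  exact constrainedInf_smul_add_smul_le (convexOn_miUH hPW hPU hPH) hdist hd₁ hd₂ hθ0
    (sub_nonneg.2 hθ1) (add_sub_cancel θ 1)

end ActiveLearning

/-- **The rate-distortion function of pool-based AL is non-increasing and convex**
(properties of `ℝ_W(m,d,𝒜)` stated in Section 4.1 of the paper). -/
theorem RDfun_antitone_convex
    {𝒲 𝒰 𝒯 ℋ : Type*} [Fintype 𝒲] [Nonempty 𝒲] [Fintype 𝒰] [Nonempty 𝒰]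
    [Fintype 𝒯] [Nonempty 𝒯] [Fintype ℋ] [Nonempty ℋ]
    (PW : 𝒲 → ℝ) (hPW0 : ∀ w, 0 ≤ PW w) (hPW1 : ∑ w, PW w = 1)
    (PU : 𝒲 → 𝒰 → ℝ) (hPU : IsKernel PU)
    (PH : 𝒯 → ℋ → ℝ) (hPH : IsKernel PH)
    (dst : 𝒲 → ℋ → ℝ) (hdst : ∀ w h, 0 ≤ dst w h) :
    (∀ d₁ d₂ : ℝ, d₁ ≤ d₂ → RDfun PW PU PH dst d₂ ≤ RDfun PW PU PH dst d₁)
    ∧ (∀ d₁ d₂ θ : ℝ,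
        RDfun PW PU PH dst d₁ < ⊤ → RDfun PW PU PH dst d₂ < ⊤ →
        0 ≤ θ → θ ≤ 1 →
          RDfun PW PU PH dst (θ * d₁ + (1 - θ) * d₂)
            ≤ (θ : EReal) * RDfun PW PU PH dst d₁
              + ((1 - θ : ℝ) : EReal) * RDfun PW PU PH dst d₂) := by
  obtain ⟨hanti, hconv⟩ := RDfun_antitone_convex_general PW hPW0 PU (fun w => (hPU w).1) PH hPH dst
  exact ⟨fun _ _ hd => hanti hd, hconv⟩
end
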